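/- Let L ≥ 3 be a prime number (necessarily odd, L = 2m+1) and let N ≥ 2 with N ≠ L. Then the L-state F-type Grover walk on the cycle with N vertices has infinite period; that is, (U^{F,L}_N)^n ≠ I for every integer n ≥ 1. -/

import Mathlib

open Matrix Polynomial

/-- The M-type Grover coin `A^{M,L}` for `L = 2m+1`: diagonal entries `-(2m-1)/L`,
off-diagonal entries `2/L`. -/
noncomputable def coinM (m : ℕ) : Matrix (Fin (2*m+1)) (Fin (2*m+1)) ℂ :=
  fun i j => if i = j then (1 - 2*(m:ℂ)) / (2*(m:ℂ)+1) else 2 / (2*(m:ℂ)+1)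

/-- The F-type Grover coin `A^{F,L}` for `L = 2m+1`: anti-diagonal entries `-(2m-1)/L`,
all other entries `2/L`. -/
noncomputable def coinF (m : ℕ) : Matrix (Fin (2*m+1)) (Fin (2*m+1)) ℂ :=
  fun i j => if (i : ℕ) + (j : ℕ) = 2*m then (1 - 2*(m:ℂ)) / (2*(m:ℂ)+1)
    else 2 / (2*(m:ℂ)+1)

/-- The time-evolution operator of the `L`-state (`L = 2m+1`) Grover walk with local coin `A`
on the cycle `C_N`: entry at `((v,i),(w,j))` is `A i j` if `v ≡ w + (i - m) (mod N)`,
and `0` otherwise. -/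
noncomputable def walkU (m N : ℕ) (A : Matrix (Fin (2*m+1)) (Fin (2*m+1)) ℂ) :
    Matrix ((ZMod N) × Fin (2*m+1)) ((ZMod N) × Fin (2*m+1)) ℂ :=
  fun p q => if p.1 = q.1 + ((p.2 : ℕ) : ZMod N) - (m : ZMod N) then A p.2 q.2 else 0

/-- `ζ_N = exp(2πi/N)`. -/
noncomputable def zetaN (N : ℕ) : ℂ := Complex.exp (2 * Real.pi * Complex.I / N)

/-- The diagonal matrix `Z = diag(ζ_N^m, ζ_N^{m-1}, …, ζ_N^{-m})`. -/
noncomputable def Zmat (N m : ℕ) : Matrix (Fin (2*m+1)) (Fin (2*m+1)) ℂ :=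
  Matrix.diagonal fun i => zetaN N ^ ((m : ℤ) - ((i : ℕ) : ℤ))

/-- The integer power `Z^k` of the diagonal matrix `Z`, defined for any `k ∈ ℤ`. -/
noncomputable def ZmatPow (N m : ℕ) (k : ℤ) : Matrix (Fin (2*m+1)) (Fin (2*m+1)) ℂ :=
  Matrix.diagonal fun i => zetaN N ^ ((((m : ℤ) - ((i : ℕ) : ℤ))) * k)

/-- `f^{M,L}_{N,k}(x) = det(x·I_L − Z^k A^{M,L})`. -/
noncomputable def fMk (m N : ℕ) (k : ℤ) : Polynomial ℂ :=
  (ZmatPow N m k * coinM m).charpoly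

/-- `f^{M,L}_N(x) = ∏_{k=0}^{N-1} f^{M,L}_{N,k}(x)`. -/
noncomputable def fM (m N : ℕ) : Polynomial ℂ :=
  ∏ k ∈ Finset.range N, fMk m N (k : ℤ)

/-- `f^{F,L}_{N,k}(x) = det(x·I_L − Z^k A^{F,L})`. -/
noncomputable def fFk (m N : ℕ) (k : ℤ) : Polynomial ℂ :=
  (ZmatPow N m k * coinF m).charpoly

/-- `f^{F,L}_N(x) = ∏_{k=0}^{N-1} f^{F,L}_{N,k}(x)`. -/
noncomputable def fF (m N : ℕ) : Polynomial ℂ :=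
  ∏ k ∈ Finset.range N, fFk m N (k : ℤ)

/-!
A Fourier transform on `ℤ/N` intertwines the walk with the coin twisted by a character `φ`, so if
the walk has finite order, then the trace of each twisted coin is an algebraic integer. With
`L = 2m + 1` and `ω = φ 1`, this trace is `(2 / L) ω⁻ᵐ (1 + ω + ⋯ + ω ^ (L - 1)) - 1`; clearing the
geometric sum shows that `2 (ω ^ L - 1) / L` is an algebraic integer, and as `L` is odd, so is
`(ω ^ L - 1) / L`. A root of unity congruent to `1` modulo an integer `L ≥ 3` is equal to `1`, hence
`ω ^ L = 1` for every `N`-th root of unity `ω`, that is, `N ∣ L`.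
-/

lemma isIntegral_of_isOfFinOrder {R A : Type*} [CommRing R] [Ring A] [Algebra R A] {a : A}
    (ha : IsOfFinOrder a) : IsIntegral R a := by
  obtain ⟨n, hn, han⟩ := isOfFinOrder_iff_pow_eq_one.mp ha
  exact IsIntegral.of_pow hn (han ▸ isIntegral_one)

lemma isOfFinOrder_addChar_apply {G M : Type*} [AddLeftCancelMonoid G] [Finite G] [Monoid M]
    (φ : AddChar G M) (v : G) : IsOfFinOrder (φ v) :=
  φ.toMonoidHom.isOfFinOrder (isOfFinOrder_of_finite (Multiplicative.ofAdd v))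

lemma isIntegral_of_mem_spectrum {R K A : Type*} [CommRing R] [Field K] [Ring A] [Algebra R K]
    [Algebra K A] [Algebra R A] [IsScalarTower R K A] {a : A} (ha : IsIntegral R a) {x : K}
    (hx : x ∈ spectrum K a) : IsIntegral R x := by
  obtain _ | _ := subsingleton_or_nontrivial A
  · simp only [spectrum.of_subsingleton, Set.mem_empty_iff_false] at hx
  obtain ⟨p, hp, hpa⟩ := ha
  refine ⟨p, hp, ?_⟩
  have hmem : (p.map (algebraMap R K)).eval x ∈ spectrum K (aeval a (p.map (algebraMap R K))) :=
    spectrum.subset_polynomial_aeval a (p.map (algebraMap R K)) ⟨x, hx, rfl⟩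
  rwa [aeval_map_algebraMap, aeval_def, hpa, spectrum.zero_eq, Set.mem_singleton_iff,
    eval_map] at hmem

lemma isIntegral_matrix_trace {R K ι : Type*} [CommRing R] [Field K] [IsAlgClosed K]
    [Algebra R K] [Fintype ι] [DecidableEq ι] {M : Matrix ι ι K} (hM : IsIntegral R M) :
    IsIntegral R M.trace := by
  rw [trace_eq_sum_roots_charpoly]
  exact IsIntegral.multiset_sum fun x hx ↦ isIntegral_of_mem_spectrum hM <|
    mem_spectrum_iff_isRoot_charpoly.mpr (isRoot_of_mem_roots hx)

lemma dvd_of_isIntegral_div {R K : Type*} [CommRing R] [IsDomain R] [IsIntegrallyClosed R]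
    [Field K] [Algebra R K] [FaithfulSMul R K] {a b : R} (hb : b ≠ 0)
    (h : IsIntegral R (algebraMap R K a / algebraMap R K b)) : b ∣ a := by
  let F := FractionRing R
  let : Algebra F K := FractionRing.liftAlgebra R K
  have hF : IsIntegral R (algebraMap R F a / algebraMap R F b) := by
    rw [← isIntegral_algebraMap_iff (algebraMap F K).injective]
    simpa only [map_div₀, ← IsScalarTower.algebraMap_apply] using h
  obtain ⟨c, hc⟩ := IsIntegrallyClosed.isIntegral_iff.mp hF
  have hb' : algebraMap R F b ≠ 0 := by simpa using hb
  refine ⟨c, FaithfulSMul.algebraMap_injective R F ?_⟩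
  rw [map_mul, hc, mul_div_cancel₀ _ hb']

lemma isIntegral_div_of_isCoprime {R K : Type*} [CommRing R] [Field K] [Algebra R K]
    {b c : R} (hbc : IsCoprime b c) {x : K} (hx : IsIntegral R x)
    (h : IsIntegral R (algebraMap R K c * x / algebraMap R K b)) :
    IsIntegral R (x / algebraMap R K b) := by
  obtain hb | hb := eq_or_ne (algebraMap R K b) 0
  · simpa only [hb, div_zero] using isIntegral_zero
  obtain ⟨u, v, huv⟩ := hbc
  have bezout : algebraMap R K u * algebraMap R K b + algebraMap R K v * algebraMap R K c = 1 := by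
    simpa only [map_add, map_mul, map_one] using congrArg (algebraMap R K) huv
  have hdecomp : x / algebraMap R K b =
      u • x + v • (algebraMap R K c * x / algebraMap R K b) := by
    simp only [Algebra.smul_def]
    field_simp
    linear_combination -x * bezout
  rw [hdecomp]
  exact (hx.smul u).add (h.smul v)

/-- For `ζ` of order `n`, `(ζ - 1) ^ (n - 1)` divides `n`, which is too small to be divisible by
`b ^ (n - 1)` unless `n = 1`. -/
lemma eq_one_of_isIntegral_sub_one_div {K : Type*} [Field K] [CharZero K] {ζ : K}
    (hζ : IsOfFinOrder ζ) {b : ℕ} (hb : 3 ≤ b) (h : IsIntegral ℤ ((ζ - 1) / b)) : ζ = 1 := by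
  have hprim := IsPrimitiveRoot.orderOf ζ
  obtain ⟨k, hk⟩ := Nat.exists_eq_add_one_of_ne_zero hζ.orderOf_pos.ne'
  rw [hk] at hprim
  obtain ⟨z, hz, hzk⟩ := hprim.self_sub_one_pow_dvd_order k.lt_succ_self
  have hz_int : IsIntegral ℤ z :=
    adjoin_le_integralClosure (isIntegral_of_isOfFinOrder hζ) hz
  have hdvd : ((b ^ k : ℕ) : ℤ) ∣ (k + 1 : ℕ) := by
    refine dvd_of_isIntegral_div (K := K) (by positivity) ?_
    have hquot : ((k + 1 : ℕ) : K) / (b ^ k : ℕ) = z * ((ζ - 1) / b) ^ k := by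
      rw [hzk, div_pow, Nat.cast_pow, mul_div_assoc]
    simpa only [eq_intCast, Int.cast_natCast, hquot] using hz_int.mul (h.pow k)
  have hle : b ^ k ≤ k + 1 := Nat.le_of_dvd k.succ_pos (Int.natCast_dvd_natCast.mp hdvd)
  have bernoulli : 1 + k * 2 ≤ b ^ k :=
    (one_add_mul_le_pow_of_sq_nonneg (by simp) (by simp) (by simp) k).trans
      (Nat.pow_le_pow_left hb k)
  obtain rfl : k = 0 := by lia
  simpa using hk

lemma isOfFinOrder_of_intertwining {ι κ R : Type*} [Fintype ι] [DecidableEq ι] [Fintype κ]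
    [DecidableEq κ] [Semiring R] {A : Matrix κ κ R} {B : Matrix ι ι R} {E : Matrix ι κ R}
    {F : Matrix κ ι R} (hEA : E * A = B * E) (hEF : E * F = 1) (hA : IsOfFinOrder A) :
    IsOfFinOrder B := by
  obtain ⟨n, hn, hAn⟩ := isOfFinOrder_iff_pow_eq_one.mp hA
  have hpow : ∀ k, E * A ^ k = B ^ k * E := fun k ↦ by
    induction k with
    | zero => simp
    | succ k ih =>
      rw [pow_succ, ← Matrix.mul_assoc, ih, Matrix.mul_assoc, hEA, ← Matrix.mul_assoc, ← pow_succ]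
  refine isOfFinOrder_iff_pow_eq_one.mpr ⟨n, hn, ?_⟩
  calc B ^ n = B ^ n * E * F := by rw [Matrix.mul_assoc, hEF, Matrix.mul_one]
    _ = E * A ^ n * F := by rw [hpow]
    _ = 1 := by rw [hAn, Matrix.mul_one, hEF]

section FourierTransform

variable {m N : ℕ}

/-- The component at the character `φ` of the walk with coin `A`, in the Fourier transform on
`ℤ/N`. For `φ v = ζ_N ^ (-k v)` it is the matrix `Z ^ k A` of the paper. -/
noncomputable def fourierCoin (φ : AddChar (ZMod N) ℂ)
    (A : Matrix (Fin (2 * m + 1)) (Fin (2 * m + 1)) ℂ) :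
    Matrix (Fin (2 * m + 1)) (Fin (2 * m + 1)) ℂ :=
  diagonal (fun i : Fin (2 * m + 1) ↦ φ (((i : ℕ) : ZMod N) - (m : ZMod N))) * A

/-- The Fourier transform at the character `φ`, sending a state `ψ` of the walk to the vector with
entries `∑ v, φ v * ψ (v, i)`. -/
def fourierMatrix (m : ℕ) (φ : AddChar (ZMod N) ℂ) :
    Matrix (Fin (2 * m + 1)) (ZMod N × Fin (2 * m + 1)) ℂ :=
  of fun i p ↦ if i = p.2 then φ p.1 else 0

variable [NeZero N]

lemma fourierMatrix_mul_walkU (φ : AddChar (ZMod N) ℂ)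
    (A : Matrix (Fin (2 * m + 1)) (Fin (2 * m + 1)) ℂ) :
    fourierMatrix m φ * walkU m N A = fourierCoin φ A * fourierMatrix m φ := by
  ext i ⟨w, j⟩
  rw [fourierCoin, Matrix.mul_assoc, diagonal_mul]
  simp only [fourierMatrix, walkU, mul_apply, of_apply, Fintype.sum_prod_type_right, ite_mul,
    zero_mul, mul_ite, mul_zero, Finset.sum_ite_eq, Finset.sum_ite_eq', Finset.mem_univ, if_true]
  rw [add_sub_assoc, AddChar.map_add_eq_mul]
  ring

lemma fourierMatrix_mul_submatrix_one (φ : AddChar (ZMod N) ℂ) :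
    fourierMatrix m φ *
      (1 : Matrix (ZMod N × Fin (2 * m + 1)) (ZMod N × Fin (2 * m + 1)) ℂ).submatrix id
        (Prod.mk 0) = 1 := by
  ext i j
  simp [fourierMatrix, mul_apply, one_apply]

lemma isOfFinOrder_fourierCoin {A : Matrix (Fin (2 * m + 1)) (Fin (2 * m + 1)) ℂ}
    (hA : IsOfFinOrder (walkU m N A)) (φ : AddChar (ZMod N) ℂ) :
    IsOfFinOrder (fourierCoin φ A) :=
  isOfFinOrder_of_intertwining (fourierMatrix_mul_walkU φ A) (fourierMatrix_mul_submatrix_one φ) hA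

end FourierTransform

section GroverCoin

variable {m N : ℕ}

lemma trace_diagonal_mul_coinF (d : Fin (2 * m + 1) → ℂ) :
    (diagonal d * coinF m).trace = 2 / (2 * m + 1) * ∑ i, d i - d ⟨m, by lia⟩ := by
  have hL : (2 * m + 1 : ℂ) ≠ 0 := by exact_mod_cast (2 * m).succ_ne_zero
  have hdiag : ∀ i : Fin (2 * m + 1),
      coinF m i i = 2 / (2 * m + 1) - if i = ⟨m, by lia⟩ then 1 else 0 := fun i ↦ by
    have hi : (i : ℕ) + i = 2 * m ↔ i = ⟨m, by lia⟩ := by rw [Fin.ext_iff]; lia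
    simp only [coinF, hi]
    split_ifs
    · field_simp
      ring
    · rw [sub_zero]
  simp only [trace, diag_apply, diagonal_mul, hdiag, mul_sub, mul_ite, mul_one, mul_zero,
    Finset.sum_sub_distrib, Finset.sum_ite_eq', Finset.mem_univ, if_true, ← Finset.sum_mul]
  ring

lemma trace_fourierCoin_coinF (φ : AddChar (ZMod N) ℂ) :
    (fourierCoin φ (coinF m)).trace =
      2 / (2 * m + 1) * φ (-m) * ∑ i ∈ Finset.range (2 * m + 1), φ 1 ^ i - 1 := by
  simp only [fourierCoin, trace_diagonal_mul_coinF, sub_self, AddChar.map_zero_eq_one,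
    Finset.sum_range, Finset.mul_sum, mul_assoc, ← AddChar.map_nsmul_eq_pow,
    ← AddChar.map_add_eq_mul, nsmul_one, neg_add_eq_sub]

variable [NeZero N]

lemma isIntegral_two_mul_addChar_sub_one_div (hU : IsOfFinOrder (walkU m N (coinF m)))
    (φ : AddChar (ZMod N) ℂ) :
    IsIntegral ℤ (2 * (φ (2 * m + 1 : ℕ) - 1) / (2 * m + 1 : ℕ)) := by
  have hφ_int (v : ZMod N) : IsIntegral ℤ (φ v) :=
    isIntegral_of_isOfFinOrder (isOfFinOrder_addChar_apply φ v)
  have htrace_int : IsIntegral ℤ (fourierCoin φ (coinF m)).trace :=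
    isIntegral_matrix_trace <| isIntegral_of_isOfFinOrder <| isOfFinOrder_fourierCoin hU φ
  have hcancel : φ (-m) * φ m = 1 := by
    rw [← AddChar.map_add_eq_mul, neg_add_cancel, AddChar.map_zero_eq_one]
  have hpow : φ (2 * m + 1 : ℕ) = φ 1 ^ (2 * m + 1) := by rw [← AddChar.map_nsmul_eq_pow, nsmul_one]
  have htrace : 2 * (φ (2 * m + 1 : ℕ) - 1) / (2 * m + 1 : ℕ) =
      ((fourierCoin φ (coinF m)).trace + 1) * φ m * (φ 1 - 1) := by
    rw [trace_fourierCoin_coinF, hpow, ← geom_sum_mul]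
    push_cast
    linear_combination
      -2 / (2 * m + 1) * (∑ i ∈ Finset.range (2 * m + 1), φ 1 ^ i) * (φ 1 - 1) * hcancel
  rw [htrace]
  exact ((htrace_int.add isIntegral_one).mul (hφ_int m)).mul ((hφ_int 1).sub isIntegral_one)

lemma addChar_eq_one_of_isOfFinOrder_walkU (hm : 1 ≤ m)
    (hU : IsOfFinOrder (walkU m N (coinF m))) (φ : AddChar (ZMod N) ℂ) :
    φ (2 * m + 1 : ℕ) = 1 := by
  have hfin := isOfFinOrder_addChar_apply φ (2 * m + 1 : ℕ)
  have hcoprime : IsCoprime ((2 * m + 1 : ℕ) : ℤ) 2 := ⟨1, -m, by push_cast; ring⟩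
  have hdiv_int : IsIntegral ℤ ((φ (2 * m + 1 : ℕ) - 1) / (2 * m + 1 : ℕ)) := by
    simpa using isIntegral_div_of_isCoprime (K := ℂ) hcoprime
      ((isIntegral_of_isOfFinOrder hfin).sub isIntegral_one)
      (by simpa using isIntegral_two_mul_addChar_sub_one_div hU φ)
  exact eq_one_of_isIntegral_sub_one_div hfin (by lia) hdiv_int

end GroverCoin

theorem stmt4_general (m N : ℕ) [NeZero N] (hm : 1 ≤ m) (hN : ¬ N ∣ 2 * m + 1) :
    ∀ n : ℕ, 1 ≤ n → (walkU m N (coinF m)) ^ n ≠ 1 := by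
  intro n hn hUn
  have hU : IsOfFinOrder (walkU m N (coinF m)) := isOfFinOrder_iff_pow_eq_one.mpr ⟨n, hn, hUn⟩
  have hφ := addChar_eq_one_of_isOfFinOrder_walkU hm hU (ZMod.stdAddChar (N := N))
  rw [← AddChar.map_zero_eq_one (ZMod.stdAddChar (N := N))] at hφ
  exact hN ((ZMod.natCast_eq_zero_iff _ _).mp (ZMod.injective_stdAddChar (N := N) hφ))

/-- For prime `L = 2m+1 ≥ 3` and `N ≥ 2` with `N ≠ L`, the F-type Grover walk
on the cycle with `N` vertices has infinite period: `U^n ≠ I` for all `n ≥ 1`. -/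
theorem stmt4 (m N : ℕ) [NeZero N] (hm : 1 ≤ m) (hp : Nat.Prime (2*m+1))
    (hN : 2 ≤ N) (hNL : N ≠ 2*m+1) :
    ∀ n : ℕ, 1 ≤ n → (walkU m N (coinF m)) ^ n ≠ 1 := by
  refine stmt4_general m N hm fun hdvd ↦ ?_
  rcases (Nat.dvd_prime hp).mp hdvd with h | h <;> lia
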